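/- Let n > 1 be an integer and let 𝔐 be a Γ-ring satisfying conditions (i)–(iv). Then any n-multiplicative derivation d of 𝔐 is additive, i.e., d(x + y) = d(x) + d(y) for all x, y ∈ 𝔐. -/

import Mathlib

/-!
The additivity defect `D(x, y) = d(x + y) - d(x) - d(y)` is homogeneous under products: applying
the derivation rule to `x₁γ₁⋯(x + y)⋯γ_{n-1}x_n` and using additivity of the product in every slot,
all terms that differentiate another factor cancel, so `D(T x, T y) = T D(x, y)` for every operator
`T` that inserts its argument into one slot of a product of length `n` (`dev_of_isSlot`). Because
`e_a γ_a e_a = e_a`, a product starting with `e_a` can be lengthened at will, so this applies to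
`x ↦ e_a γ x`, `x ↦ (e_a γ m) δ x` and `x ↦ e_a γ (x δ m)` whatever `n` is.

By (iii) it then suffices that `D` vanishes on `e_a 𝔐 = {x | e_a γ_a x = x}`, where `D` is right
linear. Fix `a` and split `x = x γ_a e_a + f'_a(x, γ_a)`, a Peirce decomposition in which `f_a`, `f'_a`
stand for multiplication by `1 - e_a`.

* On `e(1 - e)`-elements (those of `e_a 𝔐` with `x γ_a e_a = 0`), one has
  `xγm + yγm = (e + x) γ_a (yγm + f_a(γ, m))`, and `D(yγm, f_a(γ, m))` is annihilated by `e` and by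
  `x`; (ii) gives `D(x, y) = 0`.
* On `e 𝔐 e` the element `D(x, y)` satisfies `f'_a(D(x, y)γm, δ) = 0` by the previous case and (ii),
  so (iv) gives `D(x, y) = 0`.
* The two cases combine by right linearity and (ii).
-/

/-- A `Γ`-ring in the sense of Barnes: abelian groups `M` and `Γ` with a triple product
`M → Γ → M → M` that is additive in each variable and associative. -/
structure GammaRing (M : Type*) (Γ : Type*) [AddCommGroup M] [AddCommGroup Γ] where
  tri : M → Γ → M → M
  add_left : ∀ x y α z, tri (x + y) α z = tri x α z + tri y α z
  add_right : ∀ x α y z, tri x α (y + z) = tri x α y + tri x α z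
  add_mid : ∀ x α β y, tri x (α + β) y = tri x α y + tri x β y
  assoc : ∀ x α y β z, tri (tri x α y) β z = tri x α (tri y β z)

namespace GammaRing

variable {M Γ : Type*} [AddCommGroup M] [AddCommGroup Γ]

/-- The product `x₀ γ₀ x₁ γ₁ ⋯ γ_{k-1} x_k` (right associated). -/
def prodF (G : GammaRing M Γ) : (k : ℕ) → (Fin (k + 1) → M) → (Fin k → Γ) → M
  | 0, x, _ => x 0
  | k + 1, x, γ => G.tri (x 0) (γ 0) (G.prodF k (fun i => x i.succ) (fun i => γ i.succ))

end GammaRing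

namespace GammaRing

variable {M Γ : Type*} [AddCommGroup M] [AddCommGroup Γ]

lemma tri_zero (G : GammaRing M Γ) (x : M) (α : Γ) : G.tri x α 0 = 0 := by
  simpa using G.add_right x α 0 0

lemma zero_tri (G : GammaRing M Γ) (α : Γ) (y : M) : G.tri 0 α y = 0 := by
  simpa using G.add_left 0 0 α y

lemma prodF_update_add (G : GammaRing M Γ) (k : ℕ) (v : Fin (k + 1) → M) (γ : Fin k → Γ)
    (j : Fin (k + 1)) (x y : M) :
    G.prodF k (Function.update v j (x + y)) γ =
      G.prodF k (Function.update v j x) γ + G.prodF k (Function.update v j y) γ := by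
  induction k with
  | zero =>
    obtain rfl : j = 0 := Fin.fin_one_eq_zero j
    simp [prodF]
  | succ k ih =>
    have hsucc : ∀ (j : Fin (k + 1)) (z : M),
        (fun i : Fin (k + 1) => Function.update v j.succ z i.succ) =
          Function.update (fun i : Fin (k + 1) => v i.succ) j z := by
      intro j z
      ext i
      simp [Function.update_apply]
    refine Fin.cases ?_ (fun j => ?_) j
    · simp [prodF, G.add_left]
    · simp only [prodF, hsucc, ih, G.add_right]
      simp [(Fin.succ_ne_zero j).symm]

/-- `T` inserts its argument into one slot of a fixed product `x₀ γ₀ ⋯ γ_{k-1} x_k`. -/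
def IsSlot (G : GammaRing M Γ) (k : ℕ) (T : M → M) : Prop :=
  ∃ (v : Fin (k + 1) → M) (γ : Fin k → Γ) (j : Fin (k + 1)),
    ∀ x, G.prodF k (Function.update v j x) γ = T x

lemma isSlot_id (G : GammaRing M Γ) : G.IsSlot 0 (fun x => x) :=
  ⟨0, 0, 0, fun x => by simp [prodF]⟩

lemma isSlot_right (G : GammaRing M Γ) (δ : Γ) (m : M) : G.IsSlot 1 (fun x => G.tri x δ m) :=
  ⟨fun _ => m, fun _ => δ, 0, fun x => by simp [prodF]⟩

lemma IsSlot.left {G : GammaRing M Γ} {k : ℕ} {T : M → M} (h : G.IsSlot k T) (u : M) (α : Γ) :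
    G.IsSlot (k + 1) (fun x => G.tri u α (T x)) := by
  obtain ⟨v, γ, j, h⟩ := h
  refine ⟨Fin.cons u v, Fin.cons α γ, j.succ, fun x => ?_⟩
  rw [← Fin.cons_update]
  simp [prodF, h]

/-- A slot operator with values in `e M` is a slot operator of every larger length, by
multiplying repeatedly by the left identity `e` of `e M`. -/
lemma IsSlot.lengthen {G : GammaRing M Γ} {k : ℕ} {T : M → M} (h : G.IsSlot k T) {e : M} {α : Γ}
    (hT : ∀ x, G.tri e α (T x) = T x) (r : ℕ) : G.IsSlot (k + r) T := by
  induction r with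
  | zero => exact h
  | succ r ih =>
    have hlong := ih.left e α
    simp only [hT] at hlong
    exact hlong

/-- The additivity defect of an `n`-multiplicative derivation commutes with slot operators of
length `n`: the terms differentiating one of the fixed factors cancel. -/
lemma dev_of_isSlot (G : GammaRing M Γ) (k : ℕ) (d : M → M)
    (hd : ∀ (x : Fin (k + 1) → M) (γ : Fin k → Γ),
      d (G.prodF k x γ) = ∑ i : Fin (k + 1), G.prodF k (Function.update x i (d (x i))) γ)
    {T : M → M} (h : G.IsSlot k T) (x y : M) :
    d (T x + T y) - d (T x) - d (T y) = T (d (x + y) - d x - d y) := by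
  obtain ⟨v, γ, j, h⟩ := h
  have hadd : ∀ x y, T (x + y) = T x + T y := fun x y => by
    simp only [← h, prodF_update_add]
  have hsub : ∀ x y, T (x - y) = T x - T y := fun x y => by
    rw [eq_sub_iff_add_eq, ← hadd, sub_add_cancel]
  have key : ∀ z, d (T z) = T (d z) + ∑ i ∈ Finset.univ.erase j,
      G.prodF k (Function.update (Function.update v i (d (v i))) j z) γ := by
    intro z
    rw [← h z, hd, ← Finset.add_sum_erase _ _ (Finset.mem_univ j)]
    congr 1
    · simp [← h]
    · refine Finset.sum_congr rfl fun i hi => ?_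
      have hij : i ≠ j := Finset.ne_of_mem_erase hi
      rw [Function.update_of_ne hij, Function.update_comm hij]
  rw [← hadd, key, key x, key y, hsub, hsub]
  simp only [prodF_update_add, Finset.sum_add_distrib]
  abel

/-- Vanishing of the defect `D` on the right ideal `e M = {x | e α x = x}`. The defect enters only
through its homogeneity `hLL`, `hLR` and `D 0 y = 0`, `D x 0 = 0`; the maps `f`, `f'` play the role
of left and right multiplication by `1 - e`. -/
lemma dev_eq_zero_of_mem (G : GammaRing M Γ) (e : M) (α : Γ) (hidem : G.tri e α e = e)
    (f : Γ → M → M) (f' : M → Γ → M)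
    (hfα : ∀ x, f α x = x - G.tri e α x) (hf'α : ∀ x, f' x α = x - G.tri x α e)
    (hmid : ∀ x y β γ, G.tri (f' x β) γ y = G.tri x β (f γ y))
    (hii : ∀ x : M, (∀ (γ : Γ) (m : M), G.tri x γ m = 0) → x = 0)
    (hiv : ∀ x : M, (∀ (γ δ : Γ) (m : M),
        f' (G.tri (G.tri (G.tri e α x) α e) γ m) δ = 0) → G.tri (G.tri e α x) α e = 0)
    (D : M → M → M) (hD0l : ∀ y, D 0 y = 0) (hD0r : ∀ x, D x 0 = 0)
    (hL : ∀ γ x y, D (G.tri e γ x) (G.tri e γ y) = G.tri e γ (D x y))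
    (hLL : ∀ γ m δ x y, D (G.tri (G.tri e γ m) δ x) (G.tri (G.tri e γ m) δ y) =
      G.tri (G.tri e γ m) δ (D x y))
    (hLR : ∀ γ δ m x y, D (G.tri e γ (G.tri x δ m)) (G.tri e γ (G.tri y δ m)) =
      G.tri e γ (G.tri (D x y) δ m))
    (x y : M) (hx : G.tri e α x = x) (hy : G.tri e α y = y) : D x y = 0 := by
  -- `D` is right linear on `e M`, takes values in `e M` there, and is linear under left
  -- multiplication by elements of `e M`.
  have hmem : ∀ x y, G.tri e α x = x → G.tri e α y = y → G.tri e α (D x y) = D x y := by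
    intro x y hx hy
    rw [← hL, hx, hy]
  have hR : ∀ x y γ m, G.tri e α x = x → G.tri e α y = y →
      D (G.tri x γ m) (G.tri y γ m) = G.tri (D x y) γ m := by
    intro x y γ m hx hy
    have h := hLR α γ m x y
    rwa [← G.assoc, ← G.assoc, ← G.assoc, hx, hy, hmem x y hx hy] at h
  have hP : ∀ p γ x y, G.tri e α p = p → D (G.tri p γ x) (G.tri p γ y) = G.tri p γ (D x y) := by
    intro p γ x y hp
    have h := hLL α p γ x y
    rwa [hp] at h
  have hef : ∀ γ m, G.tri e α (f γ m) = 0 := by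
    intro γ m
    rw [← hmid, hf'α, hidem, sub_self, zero_tri]
  -- The corner `e M (1 - e)`.
  have h10 : ∀ x y, G.tri e α x = x → G.tri e α y = y → G.tri x α e = 0 → G.tri y α e = 0 →
      D x y = 0 := by
    intro x y hx hy hxe hye
    refine hii _ fun γ m => ?_
    have hxf : G.tri x α (f γ m) = G.tri x γ m := by rw [← hmid, hf'α, hxe, sub_zero]
    have hxy : G.tri x α (G.tri y γ m) = 0 := by
      rw [← hy, ← G.assoc, ← G.assoc, hxe, zero_tri, zero_tri]
    have hey : G.tri e α (G.tri y γ m) = G.tri y γ m := by rw [← G.assoc, hy]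
    have hu : G.tri e α (e + x) = e + x := by rw [G.add_right, hidem, hx]
    have h := hP (e + x) α (f γ m) (G.tri y γ m) hu
    rw [G.add_left, G.add_left, hef, hxf, hey, hxy, zero_add, add_zero, hR x y γ m hx hy,
      G.add_left, ← hP e α _ _ hidem, ← hP x α _ _ hx, hef, hxy, hD0l, hD0r, add_zero] at h
    exact h
  -- The corner `e M e`.
  have h11 : ∀ x y, G.tri e α x = x → G.tri e α y = y → G.tri x α e = x → G.tri y α e = y →
      D x y = 0 := by
    intro x y hx hy hxe hye
    have ht : G.tri (G.tri e α (D x y)) α e = D x y := by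
      rw [hmem x y hx hy, ← hR x y α e hx hy, hxe, hye]
    have hf'mem : ∀ z δ, G.tri e α z = z → G.tri e α (f' z δ) = f' z δ := by
      intro z δ hz
      rw [← sub_eq_zero]
      refine hii _ fun η k => ?_
      have h : ∀ a b : M, G.tri (a - b) η k = G.tri a η k - G.tri b η k := fun a b => by
        rw [eq_sub_iff_add_eq, ← G.add_left, sub_add_cancel]
      rw [h, G.assoc, hmid, ← G.assoc, hz, sub_self]
    have hf'e : ∀ z δ, G.tri (f' z δ) α e = 0 := by
      intro z δ
      rw [hmid, hfα, hidem, sub_self, tri_zero]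
    rw [← ht]
    refine hiv _ fun γ δ m => ?_
    rw [ht]
    refine hii _ fun η k => ?_
    have hxm : G.tri e α (G.tri x γ m) = G.tri x γ m := by rw [← G.assoc, hx]
    have hym : G.tri e α (G.tri y γ m) = G.tri y γ m := by rw [← G.assoc, hy]
    rw [hmid, G.assoc, ← hR x y _ _ hx hy, ← G.assoc, ← G.assoc, ← hmid, ← hmid,
      hR _ _ _ _ (hf'mem _ _ hxm) (hf'mem _ _ hym),
      h10 _ _ (hf'mem _ _ hxm) (hf'mem _ _ hym) (hf'e _ _) (hf'e _ _), zero_tri]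
  have hree : ∀ z : M, G.tri (G.tri z α e) α e = G.tri z α e := fun z => by rw [G.assoc, hidem]
  have hlee : ∀ z : M, G.tri e α z = z → G.tri e α (G.tri z α e) = G.tri z α e := fun z hz => by
    rw [← G.assoc, hz]
  have hrf : ∀ z : M, G.tri (f' z α) α e = 0 := fun z => by
    rw [hmid, hfα, hidem, sub_self, tri_zero]
  have hlf : ∀ z : M, G.tri e α z = z → G.tri e α (f' z α) = f' z α := fun z hz => by
    rw [hf'α, eq_sub_iff_add_eq]
    nth_rewrite 2 [← hlee z hz]
    rw [← G.add_right, sub_add_cancel, hz]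
  -- Splitting `D x y` on the right by `e` and `1 - e`.
  have hte : G.tri (D x y) α e = 0 := by
    rw [← hR x y α e hx hy]
    exact h11 _ _ (hlee x hx) (hlee y hy) (hree x) (hree y)
  refine hii _ fun γ m => ?_
  have hsplit : D x y = f' (D x y) α := by rw [hf'α, hte, sub_zero]
  rw [hsplit, hmid, ← hR x y _ _ hx hy, ← hmid, ← hmid, hR _ _ _ _ (hlf x hx) (hlf y hy),
    h10 _ _ (hlf x hx) (hlf y hy) (hrf x) (hrf y), zero_tri]

end GammaRing

/-- Any `n`-multiplicative derivation of a `Γ`-ring satisfying (i)-(iv) is additive. -/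
theorem gammaRing_nMulDer_additive
    {M Γ Λ : Type*} [AddCommGroup M] [AddCommGroup Γ] [Nonempty Λ]
    (G : GammaRing M Γ)
    (e : Λ → M) (γs : Λ → Γ)
    (hidem : ∀ a, G.tri (e a) (γs a) (e a) = e a)
    -- condition (i)
    (F : Λ → Γ → M → M) (F' : Λ → M → Γ → M)
    (hFadd : ∀ a γ x y, F a γ (x + y) = F a γ x + F a γ y)
    (hF'add : ∀ a x y γ, F' a (x + y) γ = F' a x γ + F' a y γ)
    (hFγ : ∀ a x, F a (γs a) x = x - G.tri (e a) (γs a) x)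
    (hF'γ : ∀ a x, F' a x (γs a) = x - G.tri x (γs a) (e a))
    (hFmid : ∀ a x y β γ, G.tri (F' a x β) γ y = G.tri x β (F a γ y))
    -- condition (ii)
    (hii : ∀ x : M, (∀ (γ : Γ) (m : M), G.tri x γ m = 0) → x = 0)
    -- condition (iii)
    (hiii : ∀ x : M, (∀ (a : Λ) (γ δ : Γ) (m : M), G.tri (G.tri (e a) γ m) δ x = 0) → x = 0)
    -- condition (iv)
    (hiv : ∀ (a : Λ) (x : M),
      (∀ (γ δ : Γ) (m : M),
        F' a (G.tri (G.tri (G.tri (e a) (γs a) x) (γs a) (e a)) γ m) δ = 0) →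
      G.tri (G.tri (e a) (γs a) x) (γs a) (e a) = 0)
    (n : ℕ) (hn : 1 < n)
    (d : M → M)
    (hd : ∀ (x : Fin (n - 1 + 1) → M) (γ : Fin (n - 1) → Γ),
      d (G.prodF (n - 1) x γ) =
        ∑ i : Fin (n - 1 + 1), G.prodF (n - 1) (Function.update x i (d (x i))) γ) :
    ∀ x y : M, d (x + y) = d x + d y := by
  obtain ⟨k, rfl⟩ : ∃ k, n = k + 2 := ⟨n - 2, by omega⟩
  have hslot : ∀ {T : M → M}, G.IsSlot (k + 1) T → ∀ x y,
      d (T x + T y) - d (T x) - d (T y) = T (d (x + y) - d x - d y) :=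
    fun h x y => G.dev_of_isSlot (k + 1) d hd h x y
  have hee : ∀ a γ z, G.tri (e a) (γs a) (G.tri (e a) γ z) = G.tri (e a) γ z := by
    intro a γ z
    rw [← G.assoc, hidem]
  have hsL : ∀ a γ, G.IsSlot (k + 1) (fun x => G.tri (e a) γ x) := by
    intro a γ
    have h := (G.isSlot_id.left (e a) γ).lengthen (fun x => hee a γ x) k
    rwa [show 0 + 1 + k = k + 1 by omega] at h
  -- An operator `x ↦ e γ (T x)` with `T` of length two has length three, too long for `n = 2`;
  -- in that case the homogeneity is applied twice.
  have hs2 : ∀ {T : M → M} (a : Λ) (γ : Γ), G.IsSlot 1 T → ∀ x y,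
      d (G.tri (e a) γ (T x) + G.tri (e a) γ (T y)) - d (G.tri (e a) γ (T x))
        - d (G.tri (e a) γ (T y)) = G.tri (e a) γ (T (d (x + y) - d x - d y)) := by
    intro T a γ hT x y
    rcases k with _ | r
    · have h := hslot (hsL a γ) (T x) (T y)
      rwa [hslot hT] at h
    · have h := (hT.left (e a) γ).lengthen (fun x => hee a γ (T x)) r
      rw [show 1 + 1 + r = r + 1 + 1 by omega] at h
      exact hslot h x y
  have hLL : ∀ a γ m δ x y,
      d (G.tri (G.tri (e a) γ m) δ x + G.tri (G.tri (e a) γ m) δ y)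
        - d (G.tri (G.tri (e a) γ m) δ x) - d (G.tri (G.tri (e a) γ m) δ y) =
      G.tri (G.tri (e a) γ m) δ (d (x + y) - d x - d y) := by
    intro a γ m δ x y
    simpa only [G.assoc] using hs2 a γ (G.isSlot_id.left m δ) x y
  have hLR : ∀ a γ δ m x y,
      d (G.tri (e a) γ (G.tri x δ m) + G.tri (e a) γ (G.tri y δ m))
        - d (G.tri (e a) γ (G.tri x δ m)) - d (G.tri (e a) γ (G.tri y δ m)) =
      G.tri (e a) γ (G.tri (d (x + y) - d x - d y) δ m) :=
    fun a γ δ m x y => hs2 a γ (G.isSlot_right δ m) x y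
  have hd0 : d 0 = 0 := by
    obtain ⟨a⟩ := ‹Nonempty Λ›
    simpa [G.tri_zero] using hLR a 0 0 0 0 0
  have hmem : ∀ a x y, G.tri (e a) (γs a) x = x → G.tri (e a) (γs a) y = y →
      d (x + y) - d x - d y = 0 := fun a =>
    G.dev_eq_zero_of_mem (e a) (γs a) (hidem a) (F a) (F' a) (hFγ a) (hF'γ a) (hFmid a) hii
      (hiv a) (fun x y => d (x + y) - d x - d y) (by simp [hd0]) (by simp [hd0])
      (fun γ x y => hslot (hsL a γ) x y) (hLL a) (hLR a)
  intro x y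
  rw [← sub_eq_zero, ← sub_sub]
  refine hiii _ fun a γ δ m => ?_
  rw [← hLL]
  exact hmem a _ _ (by rw [G.assoc, hee]) (by rw [G.assoc, hee])
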